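/- arXiv:2503.24186 — 4 statements merged into one kernel-verified Lean document; each statement's English description precedes it below -/
import Mathlib

section
/- Let R be a commutative Noetherian ring and M an R-module. Then coca_R(M) = R if and only if M has finite injective dimension over R. -/
open CategoryTheory

noncomputable section

universe u

variable (R : Type u) [CommRing R]

/-- The `n`-th Ext group of two `R`-modules, as an `R`-module. -/
abbrev ExtM (n : ℕ) (M N : ModuleCat.{u} R) : ModuleCat.{u} R :=
  ((Ext R (ModuleCat.{u} R) n).obj (Opposite.op M)).obj N

/-- The `n`-th cohomological annihilator of a module `M`:
elements `r` with `r • Ext^i(M, N) = 0` for all `i ≥ n` and all finitely generated `N`. -/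
def caN (n : ℕ) (M : ModuleCat.{u} R) : Ideal R where
  carrier := {r | ∀ i, n ≤ i → ∀ N : ModuleCat.{u} R, Module.Finite R N →
    ∀ x : ExtM R i M N, r • x = 0}
  zero_mem' := by intro i _ N _ x; simp
  add_mem' := by
    intro a b ha hb i hi N hN x
    rw [add_smul, ha i hi N hN x, hb i hi N hN x, add_zero]
  smul_mem' := by
    intro c r hr i hi N hN x
    simp only [smul_eq_mul, mul_smul, hr i hi N hN x, smul_zero]

/-- The cohomological annihilator `ca_R(M) = ⋃ₙ ca_R^n(M)`. -/
def ca (M : ModuleCat.{u} R) : Set R := ⋃ n : ℕ, (caN R n M : Set R)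

/-- The `n`-th co-cohomological annihilator of a module `M`. -/
def cocaN (n : ℕ) (M : ModuleCat.{u} R) : Ideal R where
  carrier := {r | ∀ i, n ≤ i → ∀ N : ModuleCat.{u} R, Module.Finite R N →
    ∀ x : ExtM R i N M, r • x = 0}
  zero_mem' := by intro i _ N _ x; simp
  add_mem' := by
    intro a b ha hb i hi N hN x
    rw [add_smul, ha i hi N hN x, hb i hi N hN x, add_zero]
  smul_mem' := by
    intro c r hr i hi N hN x
    simp only [smul_eq_mul, mul_smul, hr i hi N hN x, smul_zero]

/-- The co-cohomological annihilator `coca_R(M) = ⋃ₙ coca_R^n(M)`. -/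
def coca (M : ModuleCat.{u} R) : Set R := ⋃ n : ℕ, (cocaN R n M : Set R)

/-- `M` has projective dimension at most `n`: `Ext^i(M, -) = 0` for all `i > n`. -/
def projDimLE (n : ℕ) (M : ModuleCat.{u} R) : Prop :=
  ∀ i : ℕ, n < i → ∀ N : ModuleCat.{u} R, Subsingleton (ExtM R i M N)

/-- `M` has injective dimension at most `n`: `Ext^i(-, M) = 0` for all `i > n`. -/
def injDimLE (n : ℕ) (M : ModuleCat.{u} R) : Prop :=
  ∀ i : ℕ, n < i → ∀ N : ModuleCat.{u} R, Subsingleton (ExtM R i N M)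

/-- `K` is an `n`-th syzygy of `M` with respect to resolutions by
finitely generated projective modules. -/
def IsSyz : ℕ → ModuleCat.{u} R → ModuleCat.{u} R → Prop
  | 0, M, K => Nonempty (K ≃ₗ[R] M)
  | n + 1, M, K => ∃ (L P : ModuleCat.{u} R), IsSyz n M L ∧
      Module.Finite R P ∧ Module.Projective R P ∧
      ∃ f : P →ₗ[R] L, Function.Surjective f ∧ Nonempty (K ≃ₗ[R] LinearMap.ker f)

/-- `X` is a direct summand of `Y`. -/
def IsSummand (X Y : ModuleCat.{u} R) : Prop :=
  ∃ (i : X →ₗ[R] Y) (p : Y →ₗ[R] X), p.comp i = LinearMap.id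

/-- `X` is a direct summand of a finite direct sum of copies of `G`. -/
def IsSummandOfCopies (G X : ModuleCat.{u} R) : Prop :=
  ∃ k : ℕ, IsSummand R X (ModuleCat.of R (Fin k → G))

/-- The subcategories `thickⁿ(G)` of `mod R`. -/
def thickN (G : ModuleCat.{u} R) : ℕ → Set (ModuleCat.{u} R)
  | 0 => {X | Subsingleton X}
  | n + 1 => {X | ∃ (Y Y₁ Y₂ : ModuleCat.{u} R) (f : Y₁ →ₗ[R] Y) (g : Y →ₗ[R] Y₂),
      Function.Injective f ∧ Function.Surjective g ∧ LinearMap.ker g = LinearMap.range f ∧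
      ((Y₁ ∈ thickN G n ∧ IsSummandOfCopies R G Y₂) ∨
        (IsSummandOfCopies R G Y₁ ∧ Y₂ ∈ thickN G n)) ∧
      IsSummand R X Y}

/-- The balls `|G|ₙ` of Dao–Takahashi. -/
def ballN (G : ModuleCat.{u} R) : ℕ → Set (ModuleCat.{u} R)
  | 0 => {X | Subsingleton X}
  | n + 1 => {Y | ∃ (Y' Y₁ Y₂ : ModuleCat.{u} R)
      (f : Y₁ →ₗ[R] (ModuleCat.of R (Y × Y'))) (g : (ModuleCat.of R (Y × Y')) →ₗ[R] Y₂),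
      Function.Injective f ∧ Function.Surjective g ∧ LinearMap.ker g = LinearMap.range f ∧
      Y₁ ∈ ballN G n ∧ IsSummandOfCopies R G Y₂}

/-- A regular local ring: a Noetherian local ring whose maximal ideal can be
generated by `dim R` elements. -/
def IsRegularLocal (A : Type u) [CommRing A] [IsLocalRing A] : Prop :=
  IsNoetherianRing A ∧ ∃ s : Finset A, Ideal.span (↑s : Set A) = IsLocalRing.maximalIdeal A ∧
    (s.card : WithBot ℕ∞) = ringKrullDim A

/-- The localization of a module at a prime, as a module category object over the local ring. -/
abbrev locMod (p : PrimeSpectrum R) (M : ModuleCat.{u} R) :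
    ModuleCat.{u} (Localization.AtPrime p.asIdeal) :=
  ModuleCat.of (Localization.AtPrime p.asIdeal) (LocalizedModule p.asIdeal.primeCompl M)

/-- Depth of a module over a local ring, via vanishing of `Ext` from the residue field. -/
def depthE (A : Type u) [CommRing A] [IsLocalRing A] (N : ModuleCat.{u} A) : ℕ∞ :=
  sInf ((fun n : ℕ => (n : ℕ∞)) ''
    {n : ℕ | ¬ Subsingleton (ExtM A n (ModuleCat.of A (IsLocalRing.ResidueField A)) N)})

/-- The large restricted flat dimension of `M`. -/
def rfdE (M : ModuleCat.{u} R) : ℕ∞ :=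
  ⨆ p : PrimeSpectrum R,
    (depthE (Localization.AtPrime p.asIdeal)
        (ModuleCat.of (Localization.AtPrime p.asIdeal) (Localization.AtPrime p.asIdeal)) -
      depthE (Localization.AtPrime p.asIdeal) (locMod R p M))

/-- `r • f` factors through a finitely generated projective module. -/
def FactorsThroughProj (M : ModuleCat.{u} R) (f : M →ₗ[R] M) : Prop :=
  ∃ P : ModuleCat.{u} R, Module.Projective R P ∧ Module.Finite R P ∧
    ∃ (g : M →ₗ[R] P) (h : P →ₗ[R] M), h.comp g = f

/-- The annihilator of the stable endomorphism ring of `M`. -/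
def annStableEnd (M : ModuleCat.{u} R) : Set R :=
  {r | ∀ f : M →ₗ[R] M, FactorsThroughProj R M (r • f)}

/-- A resolving subcategory of `mod R`. -/
def IsResolving (C : Set (ModuleCat.{u} R)) : Prop :=
  (∀ P : ModuleCat.{u} R, Module.Finite R P → Module.Projective R P → P ∈ C) ∧
  (∀ X Y : ModuleCat.{u} R, Y ∈ C → IsSummand R X Y → X ∈ C) ∧
  (∀ (Y Y₁ Y₂ : ModuleCat.{u} R) (f : Y₁ →ₗ[R] Y) (g : Y →ₗ[R] Y₂),
    Function.Injective f → Function.Surjective g → LinearMap.ker g = LinearMap.range f →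
    Y₁ ∈ C → Y₂ ∈ C → Y ∈ C) ∧
  (∀ X ∈ C, ∀ K : ModuleCat.{u} R, IsSyz R 1 X K → K ∈ C)

/-- The smallest resolving subcategory containing `G`. -/
def resCl (G : ModuleCat.{u} R) : Set (ModuleCat.{u} R) :=
  ⋂₀ {C | IsResolving R C ∧ G ∈ C}

end

/-!
If `1` annihilates `Ext^i(N, M)` for all finitely generated `N` and all `i ≥ n`, then these groups
vanish, in particular for cyclic `N = R ⧸ I`. Baer's criterion says that `M` is injective as soon
as `Ext^1(R ⧸ I, M) = 0` for all ideals `I`; embedding `M` into an injective module and shifting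
dimension along the cokernel, `Ext^(n+1)(R ⧸ I, M) = 0` for all `I` forces injective dimension at
most `n`.

Mathlib has two constructions of `Ext`: the left derived functor `CategoryTheory.Ext`, used by
`ExtM`, and `CategoryTheory.Abelian.Ext`, which carries the long exact sequences and the theory of
injective dimension. The vanishing of either one says that every cocycle on a projective resolution
is a coboundary.
-/

section Abelian

universe w v u

variable {C : Type u} [Category.{v} C] [Abelian C]

lemma subsingleton_abelianExt_succ_iff_forall_cocycle [HasExt.{w} C] {X : C}
    (P : ProjectiveResolution X) (Y : C) (n : ℕ) :
    Subsingleton (Abelian.Ext X Y (n + 1)) ↔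
      ∀ f : P.complex.X (n + 1) ⟶ Y, P.complex.d (n + 2) (n + 1) ≫ f = 0 →
        ∃ g : P.complex.X n ⟶ Y, P.complex.d (n + 1) n ≫ g = f := by
  refine ⟨fun _ f hf ↦ (P.extMk_eq_zero_iff f (n + 2) rfl hf n rfl).1 (Subsingleton.elim _ _),
    fun h ↦ subsingleton_of_forall_eq 0 fun α ↦ ?_⟩
  obtain ⟨f, hf, rfl⟩ := P.extMk_surjective α (n + 2) rfl
  exact (P.extMk_eq_zero_iff f (n + 2) rfl hf n rfl).2 (h f hf)

lemma subsingleton_derivedExt_succ_iff_forall_cocycle (R : Type*) [Ring R] [Linear R C]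
    [EnoughProjectives C] {X : C} (P : ProjectiveResolution X) (Y : C) (n : ℕ) :
    Subsingleton (((Ext R C (n + 1)).obj (Opposite.op X)).obj Y) ↔
      ∀ f : P.complex.X (n + 1) ⟶ Y, P.complex.d (n + 2) (n + 1) ≫ f = 0 →
        ∃ g : P.complex.X n ⟶ Y, P.complex.d (n + 1) n ≫ g = f := by
  rw [← ModuleCat.isZero_iff_subsingleton, (P.isoExt (R := R) (n + 1) Y).isZero_iff,
    ← HomologicalComplex.exactAt_iff_isZero_homology,
    HomologicalComplex.exactAt_iff' _ n (n + 1) (n + 2) (by simp) (by simp),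
    ShortComplex.moduleCat_exact_iff]
  rfl

lemma subsingleton_derivedExt_succ_iff_abelianExt (R : Type*) [Ring R] [Linear R C]
    [EnoughProjectives C] [HasExt.{w} C] (X Y : C) (n : ℕ) :
    Subsingleton (((Ext R C (n + 1)).obj (Opposite.op X)).obj Y) ↔
      Subsingleton (Abelian.Ext X Y (n + 1)) :=
  (subsingleton_derivedExt_succ_iff_forall_cocycle R (projectiveResolution X) Y n).trans
    (subsingleton_abelianExt_succ_iff_forall_cocycle (projectiveResolution X) Y n).symm

variable [HasExt.{w} C] {S : ShortComplex C}

lemma exists_f_comp_eq_of_subsingleton_ext_one (hS : S.ShortExact) {Y : C}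
    [Subsingleton (Abelian.Ext S.X₃ Y 1)] (f : S.X₁ ⟶ Y) : ∃ g : S.X₂ ⟶ Y, S.f ≫ g = f := by
  obtain ⟨α, hα⟩ := Abelian.Ext.contravariant_sequence_exact₁ hS Y (Abelian.Ext.mk₀ f)
    (zero_add 1) (Subsingleton.elim _ _)
  obtain ⟨g, rfl⟩ := Abelian.Ext.homEquiv₀.symm.surjective α
  exact ⟨g, Abelian.Ext.homEquiv₀.symm.injective (by simpa using hα)⟩

lemma subsingleton_ext_X₃_of_injective_X₂ (hS : S.ShortExact) [Injective S.X₂] (Y : C) (n : ℕ)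
    [Subsingleton (Abelian.Ext Y S.X₁ (n + 2))] : Subsingleton (Abelian.Ext Y S.X₃ (n + 1)) := by
  refine subsingleton_of_forall_eq 0 fun α ↦ ?_
  obtain ⟨β, rfl⟩ :=
    Abelian.Ext.covariant_sequence_exact₃ Y hS α rfl (Subsingleton.elim _ _)
  rw [β.eq_zero_of_injective, Abelian.Ext.zero_comp]

end Abelian

section Baer

universe u

variable {R : Type u} [Ring R] (M : ModuleCat.{u} R)

lemma injective_of_subsingleton_ext_one_quotient
    (h : ∀ I : Ideal R, Subsingleton (Abelian.Ext (ModuleCat.of R (R ⧸ I)) M 1)) :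
    Injective M := by
  suffices Module.Baer R M from
    Module.injective_object_of_injective_module (inj := this.injective)
  intro I g
  have hS := ModuleCat.shortComplex_shortExact
    (ModuleCat.shortComplexOfCompEqZero I.subtype I.mkQ
      (LinearMap.exact_subtype_mkQ I).linearMap_comp_eq_zero)
    (LinearMap.exact_subtype_mkQ I) I.subtype_injective I.mkQ_surjective
  have := h I
  obtain ⟨φ, hφ⟩ := exists_f_comp_eq_of_subsingleton_ext_one hS (ModuleCat.ofHom g)
  exact ⟨φ.hom, fun x hx ↦ ConcreteCategory.congr_hom hφ ⟨x, hx⟩⟩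

lemma hasInjectiveDimensionLE_of_subsingleton_ext_quotient (n : ℕ)
    (h : ∀ I : Ideal R, Subsingleton (Abelian.Ext (ModuleCat.of R (R ⧸ I)) M (n + 1))) :
    HasInjectiveDimensionLE M n := by
  induction n generalizing M with
  | zero =>
    exact injective_iff_hasInjectiveDimensionLT_one.1
      (injective_of_subsingleton_ext_one_quotient M h)
  | succ n ih =>
    have hS : (ShortComplex.mk (Injective.ι M) _ (Limits.cokernel.condition _)).ShortExact :=
      { exact := ShortComplex.exact_cokernel _ }
    refine (hS.hasInjectiveDimensionLT_X₃_iff n (Injective.injective_under M)).1 (ih _ fun I ↦ ?_)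
    have := h I
    exact subsingleton_ext_X₃_of_injective_X₂ hS _ n

end Baer

section Coca

universe u

variable {R : Type u} [CommRing R] {M : ModuleCat.{u} R}

lemma injDimLE_of_subsingleton_extM_quotient {n : ℕ}
    (h : ∀ I : Ideal R, Subsingleton (ExtM R (n + 1) (ModuleCat.of R (R ⧸ I)) M)) :
    injDimLE R n M := by
  have : HasInjectiveDimensionLE M n :=
    hasInjectiveDimensionLE_of_subsingleton_ext_quotient M n fun I ↦
      (subsingleton_derivedExt_succ_iff_abelianExt R _ M n).1 (h I)
  rintro (_ | i) hi N
  · exact absurd hi n.not_lt_zero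
  · exact (subsingleton_derivedExt_succ_iff_abelianExt R N M i).2
      (HasInjectiveDimensionLT.subsingleton M (n + 1) (i + 1) hi N)

lemma cocaN_mono : Monotone fun n ↦ cocaN R n M :=
  fun _ _ hmn _ hr i hi ↦ hr i (hmn.trans hi)

lemma cocaN_eq_top_iff {n : ℕ} :
    cocaN R n M = ⊤ ↔
      ∀ i, n ≤ i → ∀ N : ModuleCat.{u} R, Module.Finite R N → Subsingleton (ExtM R i N M) := by
  rw [Ideal.eq_top_iff_one]
  refine ⟨fun h i hi N hN ↦ subsingleton_of_forall_eq 0 fun x ↦ ?_,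
    fun h i hi N hN x ↦ (h i hi N hN).elim _ _⟩
  rw [← one_smul R x, h i hi N hN x]

lemma coca_eq_univ_iff : coca R M = Set.univ ↔ ∃ n, cocaN R n M = ⊤ := by
  constructor
  · intro h
    obtain ⟨n, hn⟩ := Set.mem_iUnion.1 (h ▸ Set.mem_univ (1 : R))
    exact ⟨n, (Ideal.eq_top_iff_one _).2 hn⟩
  · rintro ⟨n, hn⟩
    exact Set.eq_univ_of_forall fun r ↦ Set.mem_iUnion.2 ⟨n, hn ▸ Submodule.mem_top⟩

lemma cocaN_succ_eq_top_iff_injDimLE {n : ℕ} : cocaN R (n + 1) M = ⊤ ↔ injDimLE R n M := by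
  rw [cocaN_eq_top_iff]
  exact ⟨fun h ↦ injDimLE_of_subsingleton_extM_quotient fun I ↦
    h (n + 1) le_rfl (ModuleCat.of R (R ⧸ I)) (inferInstanceAs (Module.Finite R (R ⧸ I))),
    fun h i hi N _ ↦ h i hi N⟩

end Coca

theorem stmt12_general (R : Type u) [CommRing R] (M : ModuleCat.{u} R) :
    coca R M = Set.univ ↔ ∃ n : ℕ, injDimLE R n M := by
  simp only [coca_eq_univ_iff, ← cocaN_succ_eq_top_iff_injDimLE]
  refine ⟨fun ⟨n, hn⟩ ↦ ⟨n, top_le_iff.1 ?_⟩, fun ⟨n, hn⟩ ↦ ⟨n + 1, hn⟩⟩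
  exact hn.ge.trans (cocaN_mono n.le_succ)

/-- `coca_R(M) = R` iff `M` has finite injective dimension. -/
theorem stmt12 (R : Type u) [CommRing R] [IsNoetherianRing R] (M : ModuleCat.{u} R) :
    coca R M = Set.univ ↔ ∃ n : ℕ, injDimLE R n M :=
  stmt12_general R M
end

section
/- Let R be a commutative Noetherian ring, M an R-module, and n > 0. Then {p ∈ Spec(R) : id_{R_p}(M_p) ≥ n} = ⋃_{N fin. gen.} Supp_R Ext_R^n(N, M), i.e. a prime p satisfies inj.dim_{R_p}(M_p) ≥ n if and only if Ext_R^n(N,M)_p ≠ 0 for some finitely generated R-module N. -/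
open CategoryTheory

/-!
The proof shifts the second variable of `Ext`. Embed `M` in an injective `I` with cokernel `C`.
Since `R` is Noetherian, localization preserves injectives, so `0 → S⁻¹M → S⁻¹I → S⁻¹C → 0`
drops both the injective dimension of `S⁻¹M` and the degree of `Ext(N, M)` by one when `M` is
replaced by `C`. This reduces the claim to `S⁻¹Ext¹(N, M)`. For `0 → K → P → N → 0` with `P`
finite projective, it is the cokernel of `Hom(S⁻¹P, S⁻¹M) → Hom(S⁻¹K, S⁻¹M)`, as `Hom` out of a
finitely presented module commutes with localization. By Baer's criterion, and because every ideal
of `S⁻¹R` is extended from `R`, these cokernels vanish for all `N` iff `S⁻¹M` is injective.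
-/

open Abelian

universe v w u

section Localization

variable {R : Type*} [CommRing R] (S : Submonoid R)

theorem isLocalizedModule_map_surjective_iff_of_exact {X Y Z X' Y' : Type*}
    [AddCommGroup X] [Module R X] [AddCommGroup Y] [Module R Y] [AddCommGroup Z] [Module R Z]
    [AddCommGroup X'] [Module R X'] [AddCommGroup Y'] [Module R Y']
    (a : X →ₗ[R] X') [IsLocalizedModule S a] (b : Y →ₗ[R] Y') [IsLocalizedModule S b]
    {f : X →ₗ[R] Y} {g : Y →ₗ[R] Z} (hfg : Function.Exact f g) (hg : Function.Surjective g) :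
    Function.Surjective (IsLocalizedModule.map S a b f) ↔ Subsingleton (LocalizedModule S Z) := by
  let c := LocalizedModule.mkLinearMap S Z
  have exact_map := IsLocalizedModule.map_exact S a b c f g hfg
  have surjective_map := IsLocalizedModule.map_surjective S b c g hg
  rw [← LinearMap.range_eq_top, ← exact_map.linearMap_ker_eq, LinearMap.ker_eq_top,
    ← LinearMap.range_eq_bot, LinearMap.range_eq_top.2 surjective_map, eq_comm,
    subsingleton_iff_bot_eq_top, Submodule.subsingleton_iff]

theorem subsingleton_localizedModule_congr {X Y : Type*} [AddCommGroup X] [Module R X]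
    [AddCommGroup Y] [Module R Y] (e : X ≃ₗ[R] Y) :
    Subsingleton (LocalizedModule S X) ↔ Subsingleton (LocalizedModule S Y) :=
  (IsLocalizedModule.mapEquiv S (LocalizedModule.mkLinearMap S X)
    (LocalizedModule.mkLinearMap S Y) (Localization S) e).subsingleton_congr

variable {K P M K' P' M' : Type*} (A : Type*)
  [AddCommGroup K] [Module R K] [AddCommGroup P] [Module R P] [AddCommGroup M] [Module R M]
  [CommRing A] [Algebra R A] [IsLocalization S A]
  [AddCommGroup K'] [Module R K'] [Module A K'] [IsScalarTower R A K']
  [AddCommGroup P'] [Module R P'] [Module A P'] [IsScalarTower R A P']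
  [AddCommGroup M'] [Module R M'] [Module A M'] [IsScalarTower R A M']
  (k : K →ₗ[R] K') [IsLocalizedModule S k] (p : P →ₗ[R] P') [IsLocalizedModule S p]
  (m : M →ₗ[R] M') [IsLocalizedModule S m]

open IsLocalizedModule in
theorem isLocalizedModule_map_lcomp [Module.FinitePresentation R K]
    [Module.FinitePresentation R P] (i : K →ₗ[R] P) :
    map S (mapExtendScalars S p m A) (mapExtendScalars S k m A) (i.lcomp R M) =
      ((mapExtendScalars S k p A i).lcomp A M').restrictScalars R := by
  refine IsLocalizedModule.ext S (mapExtendScalars S p m A)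
    (map_units (mapExtendScalars S k m A)) (LinearMap.ext fun φ => ?_)
  refine LinearMap.restrictScalars_injective R (IsLocalizedModule.ext S k (map_units m) ?_)
  ext
  simp

theorem mapExtendScalars_toLocalized'_subtype (L : Submodule R P) :
    IsLocalizedModule.mapExtendScalars S (L.toLocalized' A S p) p A L.subtype =
      (L.localized' A S p).subtype := by
  refine LinearMap.restrictScalars_injective R
    (IsLocalizedModule.ext S (L.toLocalized' A S p) (IsLocalizedModule.map_units p) ?_)
  ext
  simp

end Localization

section DimensionShift

variable {R : Type*} [CommRing R] {C : Type u} [Category.{v} C] [Abelian C] [Linear R C]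
  [HasExt.{w} C] {T : ShortComplex C} (hT : T.ShortExact)

variable (R) in
/-- Dimension shifting in the second variable: for a short exact sequence `T` with injective middle
term, postcomposition with the extension class of `T` raises the degree of `Ext` by one. -/
noncomputable def extLinearEquivOfInjectiveX₂ [Injective T.X₂] (N : C) (n : ℕ) :
    Abelian.Ext N T.X₃ (n + 1) ≃ₗ[R] Abelian.Ext N T.X₁ (n + 2) :=
  LinearEquiv.ofBijective
    ((Ext.bilinearCompOfLinear R N T.X₃ T.X₁ (n + 1) 1 (n + 2) rfl).flip hT.extClass)
    ⟨(injective_iff_map_eq_zero _).2 fun x hx => by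
      obtain ⟨y, rfl⟩ := Ext.covariant_sequence_exact₃ N hT x rfl hx
      rw [Ext.eq_zero_of_injective y, Ext.zero_comp],
    fun x => Ext.covariant_sequence_exact₁ N hT x (Ext.eq_zero_of_injective _) rfl⟩

end DimensionShift

section ExtOne

variable {R : Type u} [CommRing R] [Small.{v} R] {T : ShortComplex (ModuleCat.{v} R)}
  (hT : T.ShortExact) (M : ModuleCat.{v} R)

/-- The connecting map `Hom(K, M) → Ext¹(N, M)` of a short exact sequence `0 → K → P → N → 0`,
given by precomposition with the extension class. Its source consists of linear maps, rather than
morphisms of `ModuleCat`, so that the lemmas on localization of linear maps apply to it. -/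
noncomputable def homConnectingExtOne : (T.X₁ →ₗ[R] M) →ₗ[R] Abelian.Ext T.X₃ M 1 :=
  Ext.bilinearCompOfLinear R T.X₃ T.X₁ M 1 0 1 rfl hT.extClass ∘ₗ
    ((ModuleCat.homLinearEquiv (S := R)).symm ≪≫ₗ (Ext.linearEquiv₀ (R := R)).symm).toLinearMap

theorem homConnectingExtOne_apply (φ : T.X₁ →ₗ[R] M) :
    homConnectingExtOne hT M φ = hT.extClass.comp (Ext.mk₀ (ModuleCat.ofHom φ)) (add_zero 1) :=
  rfl

theorem homConnectingExtOne_exact :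
    Function.Exact (T.f.hom.lcomp R M) (homConnectingExtOne hT M) := by
  refine fun φ => ⟨fun hφ => ?_, ?_⟩
  · rw [homConnectingExtOne_apply] at hφ
    obtain ⟨y, hy⟩ := Ext.contravariant_sequence_exact₁ hT M _ rfl hφ
    obtain ⟨ψ, rfl⟩ := (Ext.mk₀_bijective _ _).2 y
    rw [Ext.mk₀_comp_mk₀, (Ext.mk₀_bijective _ _).1.eq_iff] at hy
    exact ⟨ψ.hom, congrArg ModuleCat.Hom.hom hy⟩
  · rintro ⟨ψ, rfl⟩
    have comp_eq : ModuleCat.ofHom (T.f.hom.lcomp R M ψ) = T.f ≫ ModuleCat.ofHom ψ := rfl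
    rw [homConnectingExtOne_apply, comp_eq, ← Ext.mk₀_comp_mk₀, hT.extClass_comp_assoc]

theorem homConnectingExtOne_surjective [Projective T.X₂] :
    Function.Surjective (homConnectingExtOne hT M) := fun x => by
  obtain ⟨y, rfl⟩ :=
    Ext.contravariant_sequence_exact₃ hT M x (Ext.eq_zero_of_projective _) (add_zero 1)
  obtain ⟨φ, rfl⟩ := (Ext.mk₀_bijective _ _).2 y
  exact ⟨φ.hom, homConnectingExtOne_apply hT M φ.hom⟩

variable {K' P' M' : Type*} (S : Submonoid R) (A : Type*)
  [CommRing A] [Algebra R A] [IsLocalization S A]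
  [AddCommGroup K'] [Module R K'] [Module A K'] [IsScalarTower R A K']
  [AddCommGroup P'] [Module R P'] [Module A P'] [IsScalarTower R A P']
  [AddCommGroup M'] [Module R M'] [Module A M'] [IsScalarTower R A M']

theorem subsingleton_localizedModule_ext_one_iff (hT : T.ShortExact) [Projective T.X₂]
    [Module.FinitePresentation R T.X₁] [Module.FinitePresentation R T.X₂]
    (k : T.X₁ →ₗ[R] K') [IsLocalizedModule S k] (p : T.X₂ →ₗ[R] P') [IsLocalizedModule S p]
    {M : ModuleCat.{v} R} (m : M →ₗ[R] M') [IsLocalizedModule S m] :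
    Subsingleton (LocalizedModule S (Abelian.Ext T.X₃ M 1)) ↔
      Function.Surjective ((IsLocalizedModule.mapExtendScalars S k p A T.f.hom).lcomp A M') := by
  rw [← isLocalizedModule_map_surjective_iff_of_exact S
    (IsLocalizedModule.mapExtendScalars S p m A) (IsLocalizedModule.mapExtendScalars S k m A)
    (homConnectingExtOne_exact hT M) (homConnectingExtOne_surjective hT M),
    isLocalizedModule_map_lcomp, LinearMap.coe_restrictScalars]

end ExtOne

section Baer

variable {R : Type u} [CommRing R] [IsNoetherianRing R] (S : Submonoid R) (A : Type*)
  [CommRing A] [Algebra R A] [IsLocalization S A] {M : ModuleCat.{u} R}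
  {M' : Type*} [AddCommGroup M'] [Module R M'] [Module A M'] [IsScalarTower R A M']

theorem subsingleton_localizedModule_ext_one_iff_of_surjective
    (m : M →ₗ[R] M') [IsLocalizedModule S m] {N P : ModuleCat.{u} R} [Module.Finite R P]
    [Projective P] {f : P →ₗ[R] N} (hf : Function.Surjective f) {P' : Type*} [AddCommGroup P']
    [Module R P'] [Module A P'] [IsScalarTower R A P'] (p : P →ₗ[R] P') [IsLocalizedModule S p] :
    Subsingleton (LocalizedModule S (Abelian.Ext N M 1)) ↔
      Function.Surjective ((f.ker.localized' A S p).subtype.lcomp A M') := by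
  have : Projective f.shortComplexKer.X₂ := ‹Projective P›
  have : Module.FinitePresentation R f.shortComplexKer.X₁ :=
    Module.finitePresentation_of_finite R f.ker
  have : Module.FinitePresentation R f.shortComplexKer.X₂ :=
    Module.finitePresentation_of_finite R P
  rw [← mapExtendScalars_toLocalized'_subtype]
  exact subsingleton_localizedModule_ext_one_iff S A (LinearMap.shortExact_shortComplexKer hf)
    (f.ker.toLocalized' A S p) p m

theorem baer_iff_subsingleton_localizedModule_ext_one
    (m : M →ₗ[R] M') [IsLocalizedModule S m] :
    Module.Baer A M' ↔ ∀ N : ModuleCat.{u} R, Module.Finite R N →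
      Subsingleton (LocalizedModule S (Abelian.Ext N M 1)) := by
  constructor
  · intro baer N _
    obtain ⟨P, _, _, _, _, f, hf⟩ := Module.exists_finite_presentation R N
    rw [subsingleton_localizedModule_ext_one_iff_of_surjective (P := .of R P) S A m hf
      (TensorProduct.mk R A P 1)]
    exact baer.extension_property _ (Submodule.injective_subtype _)
  · intro h
    rw [Module.Baer.iff_surjective]
    intro J
    obtain ⟨I, rfl⟩ : ∃ I, Submodule.localized' A S (Algebra.linearMap R A) I = J :=
      ⟨J.comap (algebraMap R A), by simp [Ideal.localized'_eq_map, IsLocalization.map_under S]⟩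
    have surjective_lcomp := (subsingleton_localizedModule_ext_one_iff_of_surjective (P := .of R R)
      (N := .of R (R ⧸ I)) S A m I.mkQ_surjective (Algebra.linearMap R A)).1 (h _ inferInstance)
    rwa [Submodule.ker_mkQ] at surjective_lcomp

end Baer

section InjectiveDimension

variable {R : Type u} [CommRing R] [IsNoetherianRing R] (S : Submonoid R)

theorem injective_localizedModule_iff (M : ModuleCat.{u} R) :
    Injective (M.localizedModule S) ↔ ∀ N : ModuleCat.{u} R, Module.Finite R N →
      Subsingleton (LocalizedModule S (Abelian.Ext N M 1)) := by
  let m : M →ₗ[R] M.localizedModule S := M.localizedModuleMkLinearMap S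
  have : IsLocalizedModule S m := M.localizedModule_isLocalizedModule S
  rw [← Module.injective_iff_injective_object, ← Module.Baer.iff_injective,
    baer_iff_subsingleton_localizedModule_ext_one S (Localization S) m]

theorem hasInjectiveDimensionLE_localizedModule_iff (M : ModuleCat.{u} R) (n : ℕ) :
    HasInjectiveDimensionLE (M.localizedModule S) n ↔ ∀ N : ModuleCat.{u} R, Module.Finite R N →
      Subsingleton (LocalizedModule S (Abelian.Ext N M (n + 1))) := by
  induction n generalizing M with
  | zero =>
    rw [← injective_localizedModule_iff]
    exact injective_iff_hasInjectiveDimensionLT_one.symm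
  | succ n ih =>
    obtain ⟨⟨I, _, f, _⟩⟩ := EnoughInjectives.presentation M
    let T := ShortComplex.mk f (Limits.cokernel.π f) (Limits.cokernel.condition f)
    have T_exact : T.ShortExact := { exact := ShortComplex.exact_cokernel f }
    have : Injective T.X₂ := ‹Injective I›
    let F := ModuleCat.localizedModuleFunctor.{u} S
    have injective_localized : Injective (T.map F).X₂ := F.injective_obj I
    calc HasInjectiveDimensionLE (M.localizedModule S) (n + 1)
      _ ↔ HasInjectiveDimensionLE (T.X₃.localizedModule S) n :=
        ((T_exact.map_of_exact F).hasInjectiveDimensionLT_X₃_iff n injective_localized).symm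
      _ ↔ ∀ N : ModuleCat.{u} R, Module.Finite R N →
          Subsingleton (LocalizedModule S (Abelian.Ext N T.X₃ (n + 1))) := ih T.X₃
      _ ↔ ∀ N : ModuleCat.{u} R, Module.Finite R N →
          Subsingleton (LocalizedModule S (Abelian.Ext N M (n + 2))) :=
        forall₂_congr fun N _ =>
          subsingleton_localizedModule_congr S (extLinearEquivOfInjectiveX₂ R T_exact N n)

end InjectiveDimension

section ExtComparison

variable {R : Type*} [Ring R] {C : Type u} [Category.{v} C] [Abelian C] [Linear R C]
  [HasExt.{w} C] {X : C}

theorem smul_extMk (P : ProjectiveResolution X) {Y : C} {n m : ℕ} (f : P.complex.X n ⟶ Y)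
    (hm : n + 1 = m) (hf : P.complex.d m n ≫ f = 0) (r : R) :
    r • P.extMk f m hm hf = P.extMk (r • f) m hm (by rw [Linear.comp_smul, hf, smul_zero]) := by
  rw [Ext.smul_eq_comp_mk₀, P.extMk_comp_mk₀]
  simp only [Linear.comp_smul, Category.comp_id]

variable (R) in
/-- The map sending an `n`-cocycle of `Hom(P, Y)`, for a projective resolution `P` of `X`, to its
class in `Extⁿ(X, Y)`. -/
noncomputable def extMkLinearMap (P : ProjectiveResolution X) (Y : C) (n : ℕ) :
    LinearMap.ker (Linear.leftComp R Y (P.complex.d (n + 1) n)) →ₗ[R] Abelian.Ext X Y n where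
  toFun f := P.extMk f.1 (n + 1) rfl f.2
  map_add' f g := (P.add_extMk f.1 g.1 (n + 1) rfl f.2 g.2).symm
  map_smul' r f := (smul_extMk P f.1 rfl f.2 r).symm

theorem extMkLinearMap_surjective (P : ProjectiveResolution X) (Y : C) (n : ℕ) :
    Function.Surjective (extMkLinearMap R P Y n) := fun x => by
  obtain ⟨f, hf, rfl⟩ := P.extMk_surjective x (n + 1) rfl
  exact ⟨⟨f, hf⟩, rfl⟩

theorem mem_ker_extMkLinearMap_succ {P : ProjectiveResolution X} {Y : C} {n : ℕ}
    (f : LinearMap.ker (Linear.leftComp R Y (P.complex.d (n + 2) (n + 1)))) :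
    f ∈ LinearMap.ker (extMkLinearMap R P Y (n + 1)) ↔ ∃ g, P.complex.d (n + 1) n ≫ g = f.1 :=
  P.extMk_eq_zero_iff f.1 (n + 2) rfl f.2 n rfl

variable (R) in
/-- In positive degree, `Ext` defined by deriving `Hom(-, Y)` agrees with `Abelian.Ext`, defined by
morphisms in the derived category: both are the cohomology of `Hom(P, Y)` for a projective
resolution `P` of `X`. -/
noncomputable def derivedFunctorExtLinearEquiv [EnoughProjectives C] (X Y : C) (n : ℕ) :
    ((_root_.Ext R C (n + 1)).obj (Opposite.op X)).obj Y ≃ₗ[R] Abelian.Ext X Y (n + 1) :=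
  let P := projectiveResolution X
  let D := P.complex.linearYonedaObj R Y
  let T := D.sc' n (n + 1) (n + 2)
  let toExt : LinearMap.ker T.g.hom →ₗ[R] Abelian.Ext X Y (n + 1) := extMkLinearMap R P Y (n + 1)
  have hker : LinearMap.range T.moduleCatToCycles = LinearMap.ker toExt :=
    Submodule.ext fun f => (exists_congr fun _ => Subtype.ext_iff).trans
      (mem_ker_extMkLinearMap_succ f).symm
  (P.isoExt (n + 1) Y ≪≫ D.homologyIsoSc' n (n + 1) (n + 2) (by simp) (by simp) ≪≫
      T.moduleCatHomologyIso).toLinearEquiv ≪≫ₗ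
    Submodule.quotEquivOfEq _ _ hker ≪≫ₗ
    toExt.quotKerEquivOfSurjective (extMkLinearMap_surjective P Y (n + 1))

end ExtComparison

theorem injDimLE_iff_hasInjectiveDimensionLE (R : Type u) [CommRing R] (M : ModuleCat.{u} R)
    (n : ℕ) : injDimLE R n M ↔ HasInjectiveDimensionLE M n := by
  constructor
  · intro h
    refine hasInjectiveDimensionLT_of_enoughProjectives.{u} M (n + 1) fun N => ?_
    have := h (n + 1) n.lt_succ_self N
    exact (derivedFunctorExtLinearEquiv R N M n).symm.subsingleton
  · intro h i hi N
    obtain ⟨j, rfl⟩ : ∃ j, i = j + 1 := ⟨i - 1, by lia⟩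
    have := h.subsingleton M (n + 1) (j + 1) hi N
    exact (derivedFunctorExtLinearEquiv R N M j).subsingleton

theorem stmt13_general (R : Type u) [CommRing R] [IsNoetherianRing R] (S : Submonoid R)
    (M : ModuleCat.{u} R) (n : ℕ) (hn : 0 < n) :
    (¬ injDimLE (Localization S) (n - 1) (ModuleCat.of (Localization S) (LocalizedModule S M))) ↔
      ∃ N : ModuleCat.{u} R, Module.Finite R N ∧
        Nontrivial (LocalizedModule S (ExtM R n N M)) := by
  obtain ⟨n, rfl⟩ := Nat.exists_eq_succ_of_ne_zero hn.ne'
  rw [injDimLE_iff_hasInjectiveDimensionLE,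
    ModuleCat.hasInjectiveDimensionLE_iff_of_linearEquiv (N := M.localizedModule S)
      (Shrink.linearEquiv (Localization S) _).symm,
    Nat.succ_sub_one, hasInjectiveDimensionLE_localizedModule_iff]
  push Not
  refine exists_congr fun N => and_congr_right fun _ => ?_
  rw [← not_subsingleton_iff_nontrivial, ← not_subsingleton_iff_nontrivial,
    subsingleton_localizedModule_congr S (derivedFunctorExtLinearEquiv R N M n)]

/-- `id_{R_p}(M_p) ≥ n` iff `Ext^n(N,M)_p ≠ 0` for some f.g. `N`. -/
theorem stmt13 (R : Type u) [CommRing R] [IsNoetherianRing R]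
    (M : ModuleCat.{u} R) (n : ℕ) (hn : 0 < n) (p : PrimeSpectrum R) :
    (¬ injDimLE (Localization.AtPrime p.asIdeal) (n - 1) (locMod R p M)) ↔
      ∃ N : ModuleCat.{u} R, Module.Finite R N ∧
        Nontrivial (LocalizedModule p.asIdeal.primeCompl (ExtM R n N M)) :=
  stmt13_general R p.asIdeal.primeCompl M n hn
end

section
/- Let R be a Gorenstein ring of finite Krull dimension d and let M be a maximal Cohen–Macaulay R-module. Then coca_R^{d+1}(M) = coca_R(M) = ann_R End̲_R(M) = ca_R(M), where End̲_R(M) is the stable endomorphism ring (endomorphisms modulo those factoring through a projective). -/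
open CategoryTheory

/-!
`r` annihilates the stable endomorphism ring of `M` iff `r • id_M` factors through a finitely
generated projective module `P`. Such a factorization makes `r` kill `Ext^i(M, -)` for `i > 0` and
`Ext^i(-, M)` for `i > d`, because `Ext^i(P, -)` and `Ext^i(-, P)` vanish in these degrees.

Conversely, the dimension shifts `Ext^i(M, N) ↪ Ext^{i+1}(M, ΩN)` and `Ext^i(C, M) ↪
Ext^{i+1}(Ω⁻¹C, M)`, for `M` and `C` maximal Cohen–Macaulay, bring annihilation in high degrees down
to degree `1`. There `r` kills the class of `0 → ΩM → P → M → 0` (for `ca`) or of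
`0 → M → P → Ω⁻¹M → 0` (for `coca`), so `r • id_M` lifts to, respectively extends over, `P`.
Cosyzygies `Ω⁻¹` come from dualizing syzygies: over a Gorenstein ring `Hom(-, R)` preserves maximal
Cohen–Macaulay modules, and these are reflexive.
-/

namespace CohomologicalAnnihilator

open CategoryTheory.Abelian

universe u v w

section LinearAbelian

variable {R : Type*} [CommRing R] {C : Type u} [Category.{v} C] [Abelian C] [Linear R C]
  [HasExt.{w} C]

lemma mem_annihilator_ext_iff_of_projectiveResolution {X : C} (P : ProjectiveResolution X)
    (Y : C) (n : ℕ) (r : R) :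
    r ∈ Module.annihilator R (Abelian.Ext X Y (n + 1)) ↔
      ∀ f : P.complex.X (n + 1) ⟶ Y, P.complex.d (n + 2) (n + 1) ≫ f = 0 →
        ∃ g : P.complex.X n ⟶ Y, P.complex.d (n + 1) n ≫ g = r • f := by
  have smul_extMk (f : P.complex.X (n + 1) ⟶ Y) (hf : P.complex.d (n + 2) (n + 1) ≫ f = 0) :
      r • P.extMk f (n + 2) rfl hf = P.extMk (r • f) (n + 2) rfl (by simp [hf]) := by
    simp [Ext.smul_eq_comp_mk₀, P.extMk_comp_mk₀]
  rw [Module.mem_annihilator]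
  constructor
  · intro hr f hf
    exact (P.extMk_eq_zero_iff _ _ rfl _ n rfl).1 ((smul_extMk f hf).symm.trans (hr _))
  · intro hr x
    obtain ⟨f, hf, rfl⟩ := P.extMk_surjective x (n + 2) rfl
    exact (smul_extMk f hf).trans ((P.extMk_eq_zero_iff _ _ rfl _ n rfl).2 (hr f hf))

variable (R)

lemma extClass_precomp_injective {S : ShortComplex C} (hS : S.ShortExact) (Y : C) (n : ℕ)
    [Subsingleton (Abelian.Ext S.X₂ Y n)] :
    Function.Injective (hS.extClass.precompOfLinear R Y (add_comm 1 n)) := by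
  rw [injective_iff_map_eq_zero]
  intro x hx
  obtain ⟨y, rfl⟩ := Ext.contravariant_sequence_exact₁ hS Y x (add_comm 1 n) hx
  rw [Subsingleton.elim y 0, Ext.comp_zero]

lemma extClass_postcomp_injective {S : ShortComplex C} (hS : S.ShortExact) (X : C) (n : ℕ)
    [Subsingleton (Abelian.Ext X S.X₂ n)] :
    Function.Injective (hS.extClass.postcompOfLinear R X (rfl : n + 1 = n + 1)) := by
  rw [injective_iff_map_eq_zero]
  intro x hx
  obtain ⟨y, rfl⟩ := Ext.covariant_sequence_exact₃ X hS x rfl hx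
  rw [Subsingleton.elim y 0, Ext.zero_comp]

lemma annihilator_ext_succ_le_left {S : ShortComplex C} (hS : S.ShortExact) (Y : C) (n : ℕ)
    [Subsingleton (Abelian.Ext S.X₂ Y n)] :
    Module.annihilator R (Abelian.Ext S.X₃ Y (n + 1)) ≤
      Module.annihilator R (Abelian.Ext S.X₁ Y n) :=
  LinearMap.annihilator_le_of_injective _ (extClass_precomp_injective R hS Y n)

lemma annihilator_ext_succ_le_right {S : ShortComplex C} (hS : S.ShortExact) (X : C) (n : ℕ)
    [Subsingleton (Abelian.Ext X S.X₂ n)] :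
    Module.annihilator R (Abelian.Ext X S.X₁ (n + 1)) ≤
      Module.annihilator R (Abelian.Ext X S.X₃ n) :=
  LinearMap.annihilator_le_of_injective _ (extClass_postcomp_injective R hS X n)

variable {R}

lemma exists_comp_g_eq_smul_id_of_smul_extClass_eq_zero {S : ShortComplex C}
    (hS : S.ShortExact) {r : R} (hr : r • hS.extClass = 0) :
    ∃ s : S.X₃ ⟶ S.X₂, s ≫ S.g = r • 𝟙 S.X₃ := by
  obtain ⟨x, hx⟩ := Ext.covariant_sequence_exact₃ S.X₃ hS (Ext.mk₀ (r • 𝟙 S.X₃)) rfl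
    (by simpa [Ext.mk₀_smul, Ext.smul_comp] using hr)
  obtain ⟨s, rfl⟩ := (Ext.mk₀_bijective _ _).2 x
  exact ⟨s, (Ext.mk₀_bijective _ _).1 (by simpa using hx)⟩

lemma exists_f_comp_eq_smul_id_of_smul_extClass_eq_zero {S : ShortComplex C}
    (hS : S.ShortExact) {r : R} (hr : r • hS.extClass = 0) :
    ∃ p : S.X₂ ⟶ S.X₁, S.f ≫ p = r • 𝟙 S.X₁ := by
  obtain ⟨x, hx⟩ := Ext.contravariant_sequence_exact₁ hS S.X₁ (Ext.mk₀ (r • 𝟙 S.X₁)) rfl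
    (by simpa [Ext.mk₀_smul, Ext.comp_smul] using hr)
  obtain ⟨p, rfl⟩ := (Ext.mk₀_bijective _ _).2 x
  exact ⟨p, (Ext.mk₀_bijective _ _).1 (by simpa using hx)⟩

lemma mem_annihilator_ext_of_factors_left {X P : C} {g : X ⟶ P} {h : P ⟶ X} {r : R}
    (hr : g ≫ h = r • 𝟙 X) (Y : C) (n : ℕ) [Subsingleton (Abelian.Ext P Y n)] :
    r ∈ Module.annihilator R (Abelian.Ext X Y n) := by
  refine Module.mem_annihilator.2 fun x ↦ ?_
  calc r • x
      = (Ext.mk₀ (g ≫ h)).comp x (zero_add n) := by simp [hr, Ext.mk₀_smul, Ext.smul_comp]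
    _ = (Ext.mk₀ g).comp ((Ext.mk₀ h).comp x (zero_add n)) (zero_add n) := by
        rw [Ext.mk₀_comp_mk₀_assoc]
    _ = 0 := by rw [Subsingleton.elim ((Ext.mk₀ h).comp x (zero_add n)) 0, Ext.comp_zero]

lemma mem_annihilator_ext_of_factors_right {X P : C} {g : X ⟶ P} {h : P ⟶ X} {r : R}
    (hr : g ≫ h = r • 𝟙 X) (Y : C) (n : ℕ) [Subsingleton (Abelian.Ext Y P n)] :
    r ∈ Module.annihilator R (Abelian.Ext Y X n) := by
  refine Module.mem_annihilator.2 fun x ↦ ?_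
  calc r • x
      = x.comp (Ext.mk₀ (g ≫ h)) (add_zero n) := by simp [hr, Ext.smul_eq_comp_mk₀]
    _ = (x.comp (Ext.mk₀ g) (add_zero n)).comp (Ext.mk₀ h) (add_zero n) := by
        rw [← Ext.mk₀_comp_mk₀, Ext.comp_assoc_of_third_deg_zero]
    _ = 0 := by rw [Subsingleton.elim (x.comp (Ext.mk₀ g) (add_zero n)) 0, Ext.zero_comp]

end LinearAbelian

section ModuleCat

variable {R : Type u} [CommRing R]

lemma mem_annihilator_homology_iff (S : ShortComplex (ModuleCat.{v} R)) (r : R) :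
    r ∈ Module.annihilator R S.homology ↔
      ∀ x : S.X₂, S.g.hom x = 0 → ∃ y : S.X₁, S.f.hom y = r • x := by
  have quotient_eq : Module.annihilator R S.moduleCatLeftHomologyData.H =
      (LinearMap.range S.moduleCatToCycles).colon Set.univ := Submodule.annihilator_quotient
  rw [S.moduleCatHomologyIso.toLinearEquiv.annihilator_eq, quotient_eq]
  simp only [Submodule.mem_colon, Set.mem_univ, true_imp_iff, Subtype.forall, LinearMap.mem_ker,
    LinearMap.mem_range, Subtype.ext_iff]
  rfl

lemma mem_annihilator_extM_iff_of_projectiveResolution {X : ModuleCat.{u} R}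
    (P : ProjectiveResolution X) (Y : ModuleCat.{u} R) (n : ℕ) (r : R) :
    r ∈ Module.annihilator R (ExtM R (n + 1) X Y) ↔
      ∀ f : P.complex.X (n + 1) ⟶ Y, P.complex.d (n + 2) (n + 1) ≫ f = 0 →
        ∃ g : P.complex.X n ⟶ Y, P.complex.d (n + 1) n ≫ g = r • f := by
  let homologyIso : ExtM R (n + 1) X Y ≅ _ := P.isoExt (n + 1) Y ≪≫
    (P.complex.linearYonedaObj R Y).homologyIsoSc' n (n + 1) (n + 2) (by simp) (by simp)
  rw [homologyIso.toLinearEquiv.annihilator_eq]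
  exact mem_annihilator_homology_iff _ r

lemma annihilator_extM_succ (X Y : ModuleCat.{u} R) (n : ℕ) :
    Module.annihilator R (ExtM R (n + 1) X Y) =
      Module.annihilator R (Abelian.Ext X Y (n + 1)) := by
  ext r
  rw [mem_annihilator_extM_iff_of_projectiveResolution (projectiveResolution X),
    mem_annihilator_ext_iff_of_projectiveResolution (projectiveResolution X)]

lemma subsingleton_extM_succ_iff (X Y : ModuleCat.{u} R) (n : ℕ) :
    Subsingleton (ExtM R (n + 1) X Y) ↔ Subsingleton (Abelian.Ext X Y (n + 1)) := by
  rw [← Module.annihilator_eq_top_iff (R := R), annihilator_extM_succ,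
    Module.annihilator_eq_top_iff]

lemma mem_caN_succ_iff {n : ℕ} {M : ModuleCat.{u} R} {r : R} :
    r ∈ caN R (n + 1) M ↔ ∀ i, n ≤ i → ∀ N : ModuleCat.{u} R, Module.Finite R N →
      r ∈ Module.annihilator R (Abelian.Ext M N (i + 1)) := by
  simp only [← annihilator_extM_succ, Module.mem_annihilator]
  exact ⟨fun hr i hi ↦ hr (i + 1) (by lia), fun
    | hr, i + 1, hi => hr i (by lia)⟩

lemma mem_cocaN_succ_iff {n : ℕ} {M : ModuleCat.{u} R} {r : R} :
    r ∈ cocaN R (n + 1) M ↔ ∀ i, n ≤ i → ∀ N : ModuleCat.{u} R, Module.Finite R N →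
      r ∈ Module.annihilator R (Abelian.Ext N M (i + 1)) := by
  simp only [← annihilator_extM_succ, Module.mem_annihilator]
  exact ⟨fun hr i hi ↦ hr (i + 1) (by lia), fun
    | hr, i + 1, hi => hr i (by lia)⟩

lemma hasInjectiveDimensionLE_of_injDimLE {n : ℕ} {M : ModuleCat.{u} R} (h : injDimLE R n M) :
    HasInjectiveDimensionLE M n := by
  refine (hasInjectiveDimensionLT_iff.{u} M (n + 1)).2 fun
    | i + 1, hi, N, x => ?_
  have := (subsingleton_extM_succ_iff N M i).1 (h (i + 1) hi N)
  exact Subsingleton.elim x 0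

lemma mem_annStableEnd_iff {M : ModuleCat.{u} R} {r : R} :
    r ∈ annStableEnd R M ↔ ∃ P : ModuleCat.{u} R, Module.Projective R P ∧ Module.Finite R P ∧
      ∃ (g : M ⟶ P) (h : P ⟶ M), g ≫ h = r • 𝟙 M := by
  constructor
  · intro hr
    obtain ⟨P, hP, hP', g, h, hgh⟩ := hr LinearMap.id
    exact ⟨P, hP, hP', ModuleCat.ofHom g, ModuleCat.ofHom h, ModuleCat.hom_ext hgh⟩
  · rintro ⟨P, hP, hP', g, h, hgh⟩ f
    refine ⟨P, hP, hP', g.hom, f ∘ₗ h.hom, ?_⟩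
    rw [LinearMap.comp_assoc, ← ModuleCat.hom_comp, hgh, ModuleCat.hom_smul, ModuleCat.hom_id,
      LinearMap.comp_smul, LinearMap.comp_id]

lemma exists_shortExact_finite_free [IsNoetherianRing R] (M : ModuleCat.{u} R)
    [Module.Finite R M] :
    ∃ (K P : ModuleCat.{u} R) (i : K ⟶ P) (π : P ⟶ M) (w : i ≫ π = 0),
      (ShortComplex.mk i π w).ShortExact ∧ Module.Finite R K ∧ Module.Finite R P ∧
        Module.Free R P := by
  obtain ⟨n, π, hπ⟩ := Module.Finite.exists_fin' R M
  exact ⟨_, _, _, _, _, LinearMap.shortExact_shortComplexKer hπ, inferInstance, inferInstance,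
    inferInstance⟩

lemma subsingleton_ext_of_finite_projective {X : ModuleCat.{u} R} {n : ℕ}
    [Subsingleton (Abelian.Ext X (ModuleCat.of R R) n)] (P : ModuleCat.{u} R)
    [Module.Projective R P] [Module.Finite R P] : Subsingleton (Abelian.Ext X P n) := by
  obtain ⟨k, g, f, -, -, hgf⟩ := Module.Finite.exists_comp_eq_id_of_projective R P
  let coord (j : Fin k) : P ⟶ ModuleCat.of R R := ModuleCat.ofHom (LinearMap.proj j ∘ₗ f)
  let gen (j : Fin k) : ModuleCat.of R R ⟶ P :=
    ModuleCat.ofHom (g ∘ₗ LinearMap.single R (fun _ ↦ R) j)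
  have id_eq_sum : 𝟙 P = ∑ j, coord j ≫ gen j := by
    ext p
    have hp : g (f p) = p := LinearMap.congr_fun hgf p
    simp [coord, gen, ModuleCat.hom_sum, ← map_sum, Finset.univ_sum_single, hp]
  refine subsingleton_of_forall_eq 0 fun x ↦ ?_
  calc x = ∑ j, (x.comp (Ext.mk₀ (coord j)) (add_zero n)).comp (Ext.mk₀ (gen j)) (add_zero n) := by
        conv_lhs => rw [← x.comp_mk₀_id, id_eq_sum, Ext.mk₀_sum, Ext.comp_sum]
        simp [← Ext.mk₀_comp_mk₀]
    _ = 0 := Finset.sum_eq_zero fun j _ ↦ by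
        rw [Subsingleton.elim (x.comp (Ext.mk₀ (coord j)) (add_zero n)) 0, Ext.zero_comp]

/-- `M` is maximal Cohen–Macaulay: `Ext^i(M, R) = 0` for all `i > 0`, the degrees being indexed
as `i = n + 1`. Finite generation of `M` is not part of the definition. -/
def IsMCM (M : ModuleCat.{u} R) : Prop :=
  ∀ n : ℕ, Subsingleton (Abelian.Ext M (ModuleCat.of R R) (n + 1))

lemma IsMCM.subsingleton_ext {M : ModuleCat.{u} R} (hM : IsMCM M) (P : ModuleCat.{u} R)
    [Module.Projective R P] [Module.Finite R P] (n : ℕ) :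
    Subsingleton (Abelian.Ext M P (n + 1)) :=
  have := hM n
  subsingleton_ext_of_finite_projective P

lemma IsMCM.of_shortExact {S : ShortComplex (ModuleCat.{u} R)} (hS : S.ShortExact)
    [Projective S.X₂] (h₃ : IsMCM S.X₃) : IsMCM S.X₁ := by
  intro n
  have := h₃ (n + 1)
  have := Ext.subsingleton_of_projective S.X₂ (ModuleCat.of R R) n
  exact (extClass_precomp_injective R hS _ (n + 1)).subsingleton

instance finite_dual [IsNoetherianRing R] (M : Type*) [AddCommGroup M] [Module R M]
    [Module.Finite R M] : Module.Finite R (Module.Dual R M) :=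
  Module.IsNoetherian.finite R (M →ₗ[R] R)

/-- The `R`-dual `X₃* ⟶ X₂* ⟶ X₁*` of a short complex `X₁ ⟶ X₂ ⟶ X₃`. -/
abbrev dualShortComplex (S : ShortComplex (ModuleCat.{u} R)) :
    ShortComplex (ModuleCat.{u} R) where
  X₁ := ModuleCat.of R (Module.Dual R S.X₃)
  X₂ := ModuleCat.of R (Module.Dual R S.X₂)
  X₃ := ModuleCat.of R (Module.Dual R S.X₁)
  f := ModuleCat.ofHom S.g.hom.dualMap
  g := ModuleCat.ofHom S.f.hom.dualMap
  zero := by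
    rw [← ModuleCat.ofHom_comp, LinearMap.dualMap_comp_dualMap, ← ModuleCat.hom_comp, S.zero]
    exact ModuleCat.hom_ext (LinearMap.ext fun φ ↦ LinearMap.comp_zero φ)

lemma dualMap_surjective_of_subsingleton_ext {S : ShortComplex (ModuleCat.{u} R)}
    (hS : S.ShortExact) [Subsingleton (Abelian.Ext S.X₃ (ModuleCat.of R R) 1)] :
    Function.Surjective S.f.hom.dualMap := by
  intro φ
  obtain ⟨x, hx⟩ := Ext.contravariant_sequence_exact₁ hS (ModuleCat.of R R)
    (Ext.mk₀ (ModuleCat.ofHom φ)) (add_zero 1) (Subsingleton.elim _ 0)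
  obtain ⟨ψ, rfl⟩ := (Ext.mk₀_bijective _ _).2 x
  have comp_eq : S.f ≫ ψ = ModuleCat.ofHom φ := (Ext.mk₀_bijective _ _).1 (by simpa using hx)
  exact ⟨ψ.hom, congrArg ModuleCat.Hom.hom comp_eq⟩

lemma shortExact_dualShortComplex {S : ShortComplex (ModuleCat.{u} R)} (hS : S.ShortExact)
    [Subsingleton (Abelian.Ext S.X₃ (ModuleCat.of R R) 1)] : (dualShortComplex S).ShortExact where
  exact := by
    rw [ShortComplex.moduleCat_exact_iff_range_eq_ker]
    calc LinearMap.range S.g.hom.dualMap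
        = (LinearMap.ker S.g.hom).dualAnnihilator :=
          LinearMap.range_dualMap_eq_dualAnnihilator_ker_of_surjective _ hS.moduleCat_surjective_g
      _ = (LinearMap.range S.f.hom).dualAnnihilator := by
          rw [hS.exact.moduleCat_range_eq_ker]
      _ = LinearMap.ker S.f.hom.dualMap := (LinearMap.ker_dualMap_eq_dualAnnihilator_range _).symm
  mono_f := (ModuleCat.mono_iff_injective _).2
    (LinearMap.dualMap_injective_of_surjective hS.moduleCat_surjective_g)
  epi_g := (ModuleCat.epi_iff_surjective _).2 (dualMap_surjective_of_subsingleton_ext hS)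

/-- Gorenstein rings of finite Krull dimension, encoded as the Noetherian rings with finite
injective dimension over themselves. -/
class IsGorensteinRing (R : Type u) [CommRing R] : Prop extends IsNoetherianRing R where
  exists_hasInjectiveDimensionLE (R) : ∃ d : ℕ, HasInjectiveDimensionLE (ModuleCat.of R R) d

lemma IsMCM.dual [IsGorensteinRing R] {M : ModuleCat.{u} R} [Module.Finite R M] (hM : IsMCM M) :
    IsMCM (ModuleCat.of R (Module.Dual R M)) := by
  obtain ⟨d, hd⟩ := IsGorensteinRing.exists_hasInjectiveDimensionLE R
  intro n
  obtain ⟨k, hk⟩ : ∃ k, d ≤ n + k := ⟨d, by lia⟩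
  induction k generalizing n M with
  | zero => exact HasInjectiveDimensionLT.subsingleton _ (d + 1) (n + 1) (by lia) _
  | succ k ih =>
    obtain ⟨K, P, i, π, w, hS, hK, hP, hP'⟩ := exists_shortExact_finite_free M
    have := hM 0
    have := Ext.subsingleton_of_projective (ModuleCat.of R (Module.Dual R P)) (ModuleCat.of R R) n
    have := ih (hM.of_shortExact hS) (n + 1) (by lia)
    exact (extClass_precomp_injective R (shortExact_dualShortComplex hS) _
      (n + 1)).subsingleton

lemma eval_surjective_of_dualMap_dualMap_surjective {M N : Type*} [AddCommGroup M] [Module R M]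
    [AddCommGroup N] [Module R N] [Module.IsReflexive R M] (f : M →ₗ[R] N)
    (hf : Function.Surjective f.dualMap.dualMap) : Function.Surjective (Module.Dual.eval R N) := by
  have comp_surjective : Function.Surjective (f.dualMap.dualMap ∘ₗ Module.Dual.eval R M) :=
    hf.comp (Module.bijective_dual_eval R M).2
  rw [Module.Dual.eval_naturality] at comp_surjective
  exact Function.Surjective.of_comp (g := f) comp_surjective

lemma IsMCM.shortExact_dual_dual [IsGorensteinRing R] {S : ShortComplex (ModuleCat.{u} R)}
    (hS : S.ShortExact) [Projective S.X₂] [Module.Finite R S.X₁] (h₃ : IsMCM S.X₃) :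
    (dualShortComplex (dualShortComplex S)).ShortExact := by
  have := h₃ 0
  have : Subsingleton (Abelian.Ext (dualShortComplex S).X₃ (ModuleCat.of R R) 1) :=
    (h₃.of_shortExact hS).dual 0
  exact shortExact_dualShortComplex (shortExact_dualShortComplex hS)

lemma IsMCM.eval_surjective [IsGorensteinRing R] {M : ModuleCat.{u} R} [Module.Finite R M]
    (hM : IsMCM M) : Function.Surjective (Module.Dual.eval R M) := by
  obtain ⟨K, P, i, π, w, hS, hK, hP, hP'⟩ := exists_shortExact_finite_free M
  exact eval_surjective_of_dualMap_dualMap_surjective π.hom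
    (hM.shortExact_dual_dual hS).moduleCat_surjective_g

lemma IsMCM.eval_injective [IsGorensteinRing R] {M : ModuleCat.{u} R} [Module.Finite R M]
    (hM : IsMCM M) : Function.Injective (Module.Dual.eval R M) := by
  obtain ⟨K, P, i, π, w, hS, hK, hP, hP'⟩ := exists_shortExact_finite_free M
  have hS'' := hM.shortExact_dual_dual hS
  rw [injective_iff_map_eq_zero]
  intro m hm
  obtain ⟨p, rfl⟩ := hS.moduleCat_surjective_g m
  have eval_p_mem_ker : π.hom.dualMap.dualMap (Module.Dual.eval R P p) = 0 :=
    (LinearMap.congr_fun (Module.Dual.eval_naturality π.hom) p).trans hm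
  obtain ⟨κ, hκ⟩ := (ShortComplex.moduleCat_exact_iff _).1 hS''.exact _ eval_p_mem_ker
  obtain ⟨k, rfl⟩ := IsMCM.eval_surjective (hM.of_shortExact hS) κ
  have eval_eq : Module.Dual.eval R P (i.hom k) = Module.Dual.eval R P p :=
    (LinearMap.congr_fun (Module.Dual.eval_naturality i.hom) k).symm.trans hκ
  rw [← (Module.bijective_dual_eval R P).1 eval_eq]
  exact LinearMap.congr_fun (congrArg ModuleCat.Hom.hom w) k

lemma IsMCM.isReflexive [IsGorensteinRing R] {M : ModuleCat.{u} R} [Module.Finite R M]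
    (hM : IsMCM M) : Module.IsReflexive R M :=
  ⟨hM.eval_injective, hM.eval_surjective⟩

lemma IsMCM.exists_shortExact_cosyzygy [IsGorensteinRing R] {M : ModuleCat.{u} R}
    [Module.Finite R M] (hM : IsMCM M) :
    ∃ (P C : ModuleCat.{u} R) (i : M ⟶ P) (π : P ⟶ C) (w : i ≫ π = 0),
      (ShortComplex.mk i π w).ShortExact ∧ Module.Finite R P ∧ Module.Projective R P ∧
        Module.Finite R C ∧ IsMCM C := by
  have hM_refl := hM.isReflexive
  have hM_dual := hM.dual
  have := hM_dual 0
  obtain ⟨K, F, i, π, w, hS, hK, hF, hF'⟩ :=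
    exists_shortExact_finite_free (ModuleCat.of R (Module.Dual R M))
  let e : M ≅ (dualShortComplex (.mk i π w)).X₁ := (Module.evalEquiv R M).toModuleIso
  refine ⟨_, _, e.hom ≫ (dualShortComplex (.mk i π w)).f, (dualShortComplex (.mk i π w)).g,
    by rw [Category.assoc, ShortComplex.zero, Limits.comp_zero], ?_, inferInstance, inferInstance,
    inferInstance, (hM_dual.of_shortExact hS).dual⟩
  exact ShortComplex.shortExact_of_iso
    (ShortComplex.isoMk e.symm (Iso.refl _) (Iso.refl _) (by simp) (by simp))
    (shortExact_dualShortComplex hS)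

lemma annStableEnd_subset_caN_one (M : ModuleCat.{u} R) : annStableEnd R M ⊆ caN R 1 M := by
  intro r hr
  obtain ⟨P, hP, -, g, h, hgh⟩ := mem_annStableEnd_iff.1 hr
  refine mem_caN_succ_iff.2 fun i _ N _ ↦ ?_
  have := Ext.subsingleton_of_projective P N i
  exact mem_annihilator_ext_of_factors_left hgh N (i + 1)

lemma annStableEnd_subset_cocaN {d : ℕ} [HasInjectiveDimensionLE (ModuleCat.of R R) d]
    (M : ModuleCat.{u} R) : annStableEnd R M ⊆ cocaN R (d + 1) M := by
  intro r hr
  obtain ⟨P, hP, hP', g, h, hgh⟩ := mem_annStableEnd_iff.1 hr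
  refine mem_cocaN_succ_iff.2 fun i hi N _ ↦ ?_
  have := HasInjectiveDimensionLT.subsingleton (ModuleCat.of R R) (d + 1) (i + 1) (by lia) N
  have := subsingleton_ext_of_finite_projective (X := N) (n := i + 1) P
  exact mem_annihilator_ext_of_factors_right hgh N (i + 1)

lemma IsMCM.mem_annihilator_ext_one_of_forall_finite [IsNoetherianRing R] {M : ModuleCat.{u} R}
    (hM : IsMCM M) {r : R} {n : ℕ}
    (hr : ∀ N : ModuleCat.{u} R, Module.Finite R N →
      r ∈ Module.annihilator R (Abelian.Ext M N (n + 1)))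
    (N : ModuleCat.{u} R) [Module.Finite R N] :
    r ∈ Module.annihilator R (Abelian.Ext M N 1) := by
  induction n with
  | zero => exact hr N inferInstance
  | succ n ih =>
    refine ih fun N _ ↦ ?_
    obtain ⟨K, P, i, π, w, hS, hK, hP, hP'⟩ := exists_shortExact_finite_free N
    have := hM.subsingleton_ext P n
    exact annihilator_ext_succ_le_right R hS M (n + 1) (hr K hK)

lemma ca_subset_annStableEnd [IsNoetherianRing R] {M : ModuleCat.{u} R} [Module.Finite R M]
    (hM : IsMCM M) : ca R M ⊆ annStableEnd R M := by
  refine Set.iUnion_subset fun n r hr ↦ ?_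
  have hr' : r ∈ caN R (n + 1) M := fun i hi ↦ hr i (by lia)
  obtain ⟨K, P, i, π, w, hS, hK, hP, hP'⟩ := exists_shortExact_finite_free M
  have kills_extClass := hM.mem_annihilator_ext_one_of_forall_finite
    (mem_caN_succ_iff.1 hr' n le_rfl) K
  obtain ⟨s, hs⟩ := exists_comp_g_eq_smul_id_of_smul_extClass_eq_zero hS
    (Module.mem_annihilator.1 kills_extClass _)
  exact mem_annStableEnd_iff.2 ⟨P, inferInstance, hP, s, π, hs⟩

lemma IsMCM.mem_annihilator_ext_one_of_forall_isMCM [IsGorensteinRing R]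
    {C : ModuleCat.{u} R} [Module.Finite R C] (hC : IsMCM C) {M : ModuleCat.{u} R} {r : R} {n : ℕ}
    (hr : ∀ C : ModuleCat.{u} R, Module.Finite R C → IsMCM C →
      r ∈ Module.annihilator R (Abelian.Ext C M (n + 1))) :
    r ∈ Module.annihilator R (Abelian.Ext C M 1) := by
  induction n with
  | zero => exact hr C inferInstance hC
  | succ n ih =>
    refine ih fun C _ hC ↦ ?_
    obtain ⟨P, C', i, π, w, hS, -, hP', hC'_fin, hC'⟩ := hC.exists_shortExact_cosyzygy
    have := Ext.subsingleton_of_projective P M n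
    exact annihilator_ext_succ_le_left R hS M (n + 1) (hr C' hC'_fin hC')

lemma coca_subset_annStableEnd [IsGorensteinRing R] {M : ModuleCat.{u} R} [Module.Finite R M]
    (hM : IsMCM M) : coca R M ⊆ annStableEnd R M := by
  refine Set.iUnion_subset fun n r hr ↦ ?_
  have hr' : r ∈ cocaN R (n + 1) M := fun i hi ↦ hr i (by lia)
  obtain ⟨P, C, i, π, w, hS, hP, hP', hC_fin, hC⟩ := hM.exists_shortExact_cosyzygy
  have kills_extClass := hC.mem_annihilator_ext_one_of_forall_isMCM
    fun N hN _ ↦ mem_cocaN_succ_iff.1 hr' n le_rfl N hN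
  obtain ⟨p, hp⟩ := exists_f_comp_eq_smul_id_of_smul_extClass_eq_zero hS
    (Module.mem_annihilator.1 kills_extClass _)
  exact mem_annStableEnd_iff.2 ⟨P, hP', hP, i, p, hp⟩

end ModuleCat

end CohomologicalAnnihilator

/-- over a Gorenstein ring with `id_R(R) = d`, for a maximal
Cohen–Macaulay module `M`,
`coca_R^{d+1}(M) = coca_R(M) = ann End̲_R(M) = ca_R(M)`. -/
theorem stmt16 (R : Type u) [CommRing R] [IsNoetherianRing R] (d : ℕ)
    (hd : injDimLE R d (ModuleCat.of R R))
    (hd' : ∀ m : ℕ, injDimLE R m (ModuleCat.of R R) → d ≤ m)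
    (M : ModuleCat.{u} R) [Module.Finite R M]
    (hMCM : ∀ i : ℕ, 0 < i → Subsingleton (ExtM R i M (ModuleCat.of R R))) :
    (cocaN R (d + 1) M : Set R) = coca R M ∧
      coca R M = annStableEnd R M ∧ annStableEnd R M = ca R M := by
  have hR := CohomologicalAnnihilator.hasInjectiveDimensionLE_of_injDimLE hd
  have : CohomologicalAnnihilator.IsGorensteinRing R := ⟨d, hR⟩
  have hM : CohomologicalAnnihilator.IsMCM M := fun n ↦
    (CohomologicalAnnihilator.subsingleton_extM_succ_iff M _ n).1 (hMCM (n + 1) n.succ_pos)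
  have cocaN_subset : (cocaN R (d + 1) M : Set R) ⊆ coca R M :=
    Set.subset_iUnion (fun n ↦ (cocaN R n M : Set R)) (d + 1)
  have coca_subset := CohomologicalAnnihilator.coca_subset_annStableEnd hM
  have ann_subset_cocaN := CohomologicalAnnihilator.annStableEnd_subset_cocaN (d := d) M
  have ann_subset_ca : annStableEnd R M ⊆ ca R M :=
    (CohomologicalAnnihilator.annStableEnd_subset_caN_one M).trans
      (Set.subset_iUnion (fun n ↦ (caN R n M : Set R)) 1)
  have ca_subset := CohomologicalAnnihilator.ca_subset_annStableEnd hM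
  exact ⟨cocaN_subset.antisymm (coca_subset.trans ann_subset_cocaN),
    coca_subset.antisymm (ann_subset_cocaN.trans cocaN_subset),
    ann_subset_ca.antisymm ca_subset⟩
end

section
/- Let R be a commutative Noetherian ring and suppose there exist s ≥ 0 and a finitely generated module G such that the s-th syzygy of every finitely generated R-module lies in the smallest resolving subcategory containing G. Then R has finite Krull dimension, and dim(R) ≤ s + Rfd_R(G) + 1, where Rfd_R(G) = sup{depth(R_p) − depth(G_p) : p ∈ Spec(R)} is the large restricted flat dimension of G (and G ≠ 0). -/
open CategoryTheory

/-!
The resolving closure of `G` is controlled by grade conditions: for an exact functor `T`, if the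
grade of `A` on `T R` is at least `n`, then the modules `X` such that the grade of `A` on `T X` is
at least `n` form a resolving subcategory. We take `A = R ⧸ p` and `T` the localization at `p`.

Given a chain of primes of length `n + 1` and a finitely generated module `N`, prime avoidance
produces a prime `p`, strictly below the top of the chain, with the grade of `R ⧸ p` on `Nₚ` at
least `n`: choose `x` in the top prime outside every associated prime of `N` not containing the top
prime, replace the chain by one whose second prime contains `x`, and induct on `N ⧸ x N`.
Stopping below the top is what makes `x` regular on `Nₚ`.

Apply this to `N = R × G`. Dimension shifting from `Hom (R ⧸ p, (R ⧸ p)ₚ) ≠ 0` gives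
`Extˢ (R ⧸ p, Kₚ) ≠ 0` for an `s`-th syzygy `K` of `R ⧸ p` as soon as `s ≤ n`, whereas `K` lying in
the resolving closure of `G` makes this group vanish when `s < n`. Hence `n ≤ s`, that is,
`dim R ≤ s + 1`.
-/

open Limits

section GradeGE

variable {C : Type*} [Category* C] [Abelian C] [HasExt.{w} C] {A : C} {n : ℕ}

/-- The grade of `A` on `X` is at least `n`: `Ext` from `A` to `X` vanishes in degrees below `n`.
For `A = R ⧸ p` and `X = Mₚ`, with `M` finitely generated over a Noetherian ring `R`, this says
that `Mₚ` has depth at least `n`. -/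
def GradeGE (A : C) (n : ℕ) (X : C) : Prop :=
  ∀ i < n, Subsingleton (Abelian.Ext A X i)

namespace GradeGE

lemma of_le {X : C} {m : ℕ} (hX : GradeGE A n X) (hmn : m ≤ n) : GradeGE A m X :=
  fun i hi ↦ hX i (hi.trans_le hmn)

lemma of_retract {X Y : C} (r : Retract X Y) (hY : GradeGE A n Y) : GradeGE A n X := by
  intro i hi
  have := hY i hi
  have hid (x : Abelian.Ext A X i) :
      (x.comp (.mk₀ r.i) (add_zero i)).comp (.mk₀ r.r) (add_zero i) = x := by simp
  refine subsingleton_of_forall_eq 0 fun x ↦ ?_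
  rw [← hid x, Subsingleton.elim (x.comp _ _) 0, Abelian.Ext.zero_comp]

lemma of_iso {X Y : C} (e : X ≅ Y) (hX : GradeGE A n X) : GradeGE A n Y :=
  hX.of_retract (Retract.ofIso e.symm)

lemma biproduct {J : Type*} [Finite J] {X : J → C} [HasBiproduct X]
    (hX : ∀ j, GradeGE A n (X j)) : GradeGE A n (⨁ X) := by
  have := Fintype.ofFinite J
  intro i hi
  have (j : J) := hX j i hi
  exact (Abelian.Ext.addEquivBiproduct A (biproduct.isBilimit X) i).subsingleton

variable {S : ShortComplex C} (hS : S.ShortExact)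

include hS

lemma middle (h₁ : GradeGE A n S.X₁) (h₃ : GradeGE A n S.X₃) : GradeGE A n S.X₂ := by
  intro i hi
  have := h₁ i hi
  have := h₃ i hi
  refine subsingleton_of_forall_eq 0 fun x ↦ ?_
  obtain ⟨y, rfl⟩ := Abelian.Ext.covariant_sequence_exact₂ A hS x (Subsingleton.elim _ _)
  rw [Subsingleton.elim y 0, Abelian.Ext.zero_comp]

lemma eq_zero_of_comp_eq_zero (h₃ : GradeGE A n S.X₃) {x : Abelian.Ext A S.X₁ n}
    (hx : x.comp (.mk₀ S.f) (add_zero n) = 0) : x = 0 := by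
  cases n with
  | zero =>
    have := hS.mono_f
    exact Abelian.Ext.postcomp_mk₀_injective_of_mono A S.f (by simpa using hx)
  | succ n =>
    have := h₃ n n.lt_succ_self
    obtain ⟨y, rfl⟩ := Abelian.Ext.covariant_sequence_exact₁ A hS x hx rfl
    rw [Subsingleton.elim y 0, Abelian.Ext.zero_comp]

lemma left (h₂ : GradeGE A n S.X₂) (h₃ : GradeGE A n S.X₃) : GradeGE A n S.X₁ := by
  intro i hi
  have := h₂ i hi
  exact subsingleton_of_forall_eq 0 fun x ↦
    eq_zero_of_comp_eq_zero hS (h₃.of_le hi.le) (Subsingleton.elim _ _)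

end GradeGE

lemma nontrivial_ext_succ_left {S : ShortComplex C} (hS : S.ShortExact) {m : ℕ}
    (h₂ : Subsingleton (Abelian.Ext A S.X₂ m)) (h₃ : Nontrivial (Abelian.Ext A S.X₃ m)) :
    Nontrivial (Abelian.Ext A S.X₁ (m + 1)) := by
  obtain ⟨x, hx⟩ := exists_ne (0 : Abelian.Ext A S.X₃ m)
  refine nontrivial_of_ne (x.comp hS.extClass rfl) 0 fun h ↦ hx ?_
  obtain ⟨y, rfl⟩ := Abelian.Ext.covariant_sequence_exact₃ A hS x rfl h
  rw [Subsingleton.elim y 0, Abelian.Ext.zero_comp]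

lemma GradeGE.succ_of_isSMulRegular {R : Type*} [CommRing R] [Small.{v} R]
    {A M : ModuleCat.{v} R} {x : R} (hA : x ∈ Module.annihilator R A) (hM : IsSMulRegular M x)
    (h : GradeGE A n (.of R (QuotSMulTop x M))) : GradeGE A (n + 1) M := by
  intro i hi
  refine subsingleton_of_forall_eq 0 fun y ↦ ?_
  have hS := hM.smulShortComplex_shortExact
  have hy : y.comp (.mk₀ (M.smulShortComplex x).f) (add_zero i) = 0 :=
    congr($(Abelian.Ext.postcomp_smul_id_eq_zero_of_mem_annihilator hA i) y)
  exact eq_zero_of_comp_eq_zero hS (h.of_le (Nat.le_of_lt_succ hi)) hy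

end GradeGE

section Resolving

universe u

/-- The retract in `ModuleCat R` given by a split injection of modules. -/
abbrev retractOfCompEqId {R : Type*} [Ring R] {M N : Type v} [AddCommGroup M] [Module R M]
    [AddCommGroup N] [Module R N] {i : M →ₗ[R] N} {q : N →ₗ[R] M} (h : q ∘ₗ i = .id) :
    Retract (ModuleCat.of R M) (ModuleCat.of R N) where
  i := ModuleCat.ofHom i
  r := ModuleCat.ofHom q
  retract := ModuleCat.hom_ext h

variable {R : Type u} [CommRing R] {C : Type*} [Category* C] [Abelian C] [HasExt.{w} C]
  (T : ModuleCat.{u} R ⥤ C) {A : C} {n : ℕ}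

lemma exists_shortExact_of_kerEquiv {K P L : ModuleCat.{u} R} {f : P →ₗ[R] L}
    (hf : Function.Surjective f) (e : K ≃ₗ[R] LinearMap.ker f) :
    ∃ (i : K ⟶ P) (hif : i ≫ ModuleCat.ofHom f = 0), (ShortComplex.mk _ _ hif).ShortExact := by
  refine ⟨ModuleCat.ofHom ((LinearMap.ker f).subtype ∘ₗ e.toLinearMap), by ext; simp, ?_⟩
  refine ModuleCat.shortComplex_shortExact _ ?_
    ((LinearMap.ker f).injective_subtype.comp e.injective) hf
  exact (LinearEquiv.precomp_exact_iff_exact ..).2 (LinearMap.exact_subtype_ker_map f)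

variable [T.Additive]

lemma GradeGE.obj_of_finite_projective (hR : GradeGE A n (T.obj (.of R R)))
    (P : ModuleCat.{u} R) [Module.Finite R P] [Module.Projective R P] :
    GradeGE A n (T.obj P) := by
  obtain ⟨k, f, hf⟩ := Module.Finite.exists_fin' R P
  obtain ⟨i, hi⟩ := Module.projective_lifting_property f LinearMap.id hf
  refine .of_retract ((retractOfCompEqId hi).map T) ?_
  let e : (⨁ fun _ : Fin k ↦ T.obj (.of R R)) ≅ T.obj (.of R (Fin k → R)) :=
    (T.mapBiproduct fun _ : Fin k ↦ ModuleCat.of R R).symm ≪≫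
      T.mapIso (ModuleCat.biproductIsoPi fun _ : Fin k ↦ ModuleCat.of R R)
  exact (GradeGE.biproduct fun _ ↦ hR).of_iso e

variable [PreservesFiniteLimits T] [PreservesFiniteColimits T]

lemma isResolving_setOf_gradeGE_obj (hR : GradeGE A n (T.obj (.of R R))) :
    IsResolving R {X | GradeGE A n (T.obj X)} := by
  refine ⟨fun P _ _ ↦ hR.obj_of_finite_projective T P, ?_, ?_, ?_⟩
  · rintro X Y hY ⟨i, q, hqi⟩
    exact .of_retract ((retractOfCompEqId hqi).map T) hY
  · intro Y Y₁ Y₂ f g hf hg hfg h₁ h₂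
    have hS := ModuleCat.shortComplex_shortExact
      (ModuleCat.shortComplexOfCompEqZero f g (LinearMap.exact_iff.2 hfg).linearMap_comp_eq_zero)
      (LinearMap.exact_iff.2 hfg) hf hg
    exact .middle (hS.map_of_exact T) h₁ h₂
  · rintro X hX K ⟨L, P, ⟨eL⟩, _, _, f, hf, ⟨e⟩⟩
    obtain ⟨i, _, hS⟩ := exists_shortExact_of_kerEquiv hf e
    exact .left (hS.map_of_exact T) (hR.obj_of_finite_projective T P)
      (.of_iso (T.mapIso eL.symm.toModuleIso) hX)

lemma nontrivial_ext_obj_of_isSyz (hR : GradeGE A n (T.obj (.of R R))) {M : ModuleCat.{u} R}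
    (hM : Nontrivial (A ⟶ T.obj M)) {m : ℕ} (hm : m ≤ n) {K : ModuleCat.{u} R}
    (hK : IsSyz R m M K) :
    Nontrivial (Abelian.Ext A (T.obj K) m) := by
  induction m generalizing K with
  | zero =>
    obtain ⟨e⟩ := hK
    exact (Abelian.Ext.homEquiv₀.trans (T.mapIso e.toModuleIso).homToEquiv).nontrivial
  | succ m ih =>
    obtain ⟨L, P, hL, _, _, f, hf, ⟨e⟩⟩ := hK
    obtain ⟨i, _, hS⟩ := exists_shortExact_of_kerEquiv hf e
    exact nontrivial_ext_succ_left (hS.map_of_exact T) (hR.obj_of_finite_projective T P m hm)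
      (ih (by lia) hL)

lemma exists_isSyz [IsNoetherianRing R] (m : ℕ) (M : ModuleCat.{u} R) [Module.Finite R M] :
    ∃ K : ModuleCat.{u} R, Module.Finite R K ∧ IsSyz R m M K := by
  induction m with
  | zero => exact ⟨M, ‹_›, ⟨.refl R M⟩⟩
  | succ m ih =>
    obtain ⟨L, _, hL⟩ := ih
    obtain ⟨k, f, hf⟩ := Module.Finite.exists_fin' R L
    exact ⟨.of R (LinearMap.ker f), Module.IsNoetherian.finite R (LinearMap.ker f),
      L, .of R (Fin k → R), hL, inferInstanceAs (Module.Finite R (Fin k → R)),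
      inferInstanceAs (Module.Projective R (Fin k → R)), f, hf, ⟨.refl R _⟩⟩

end Resolving

section AssociatedPrimes

variable {R : Type*} [CommRing R] [IsNoetherianRing R] {M : Type*} [AddCommGroup M] [Module R M]

lemma exists_mem_forall_mem_associatedPrimes_imp_le [Module.Finite R M] (I : Ideal R) :
    ∃ x ∈ I, ∀ Q ∈ associatedPrimes R M, x ∈ Q → I ≤ Q := by
  by_contra! hcover
  let s : Set (Ideal R) := {Q ∈ associatedPrimes R M | ¬ I ≤ Q}
  have hs : s.Finite := (associatedPrimes.finite R M).subset (Set.sep_subset _ _)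
  have hI : (I : Set R) ⊆ ⋃ Q ∈ s, Q := fun x hx ↦ by
    obtain ⟨Q, hQ, hxQ, hIQ⟩ := hcover x hx
    exact Set.mem_biUnion ⟨hQ, hIQ⟩ hxQ
  obtain ⟨Q, hQ, hIQ⟩ :=
    (Ideal.subset_union_prime_finite hs (f := id) ⊥ ⊥ fun Q hQ _ _ ↦ hQ.1.isPrime).1 hI
  exact hQ.2 hIQ

open Module.associatedPrimes in
lemma isSMulRegular_of_isLocalizedModule (S : Submonoid R) (R' : Type*) [CommRing R']
    [Algebra R R'] [IsLocalization S R'] {M' : Type*} [AddCommGroup M'] [Module R M']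
    [Module R' M'] [IsScalarTower R R' M'] (f : M →ₗ[R] M') [IsLocalizedModule S f] {x : R}
    (hx : ∀ Q ∈ associatedPrimes R M, x ∈ Q → ¬ Disjoint (S : Set R) Q) :
    IsSMulRegular M' x := by
  rw [← isSMulRegular_algebraMap_iff R']
  have : IsNoetherianRing R' := IsLocalization.isNoetherianRing S R' ‹_›
  by_contra hreg
  have hmem : algebraMap R R' x ∈ ⋃ Q ∈ associatedPrimes R' M', (Q : Set R') := by
    rwa [biUnion_associatedPrimes_eq_compl_regular]
  obtain ⟨Q, hQ, hxQ⟩ := Set.mem_iUnion₂.1 hmem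
  have hQR : Q.comap (algebraMap R R') ∈ associatedPrimes R M :=
    comap_mem_associatedPrimes_of_mem_associatedPrimes_of_isLocalizedModule_of_fg
      S f Q hQ (IsNoetherian.noetherian _)
  refine hx _ hQR hxQ ?_
  exact ((IsLocalization.isPrime_iff_isPrime_disjoint S R' Q).1 hQ.isPrime).2

end AssociatedPrimes

section LocalizationAtPrime

universe u
variable {R : Type u} [CommRing R] (p : PrimeSpectrum R)

/-- The exact endofunctor `M ↦ Rₚ ⊗ M` of the category of `R`-modules. Keeping the values over `R`
lets `Ext` be computed from `R ⧸ p` itself rather than from the residue field of `Rₚ`. -/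
abbrev localizationFunctor : ModuleCat.{u} R ⥤ ModuleCat.{u} R :=
  MonoidalCategory.tensorLeft (ModuleCat.of R (Localization.AtPrime p.asIdeal))

instance : PreservesFiniteLimits (localizationFunctor p) :=
  have : Module.Flat R (Localization.AtPrime p.asIdeal) :=
    IsLocalization.flat _ p.asIdeal.primeCompl
  inferInstance

lemma nontrivial_quotient_hom_localizationFunctor_obj :
    Nontrivial (ModuleCat.of R (R ⧸ p.asIdeal) ⟶
      (localizationFunctor p).obj (.of R (R ⧸ p.asIdeal))) := by
  let φ := TensorProduct.mk R (Localization.AtPrime p.asIdeal) (R ⧸ p.asIdeal) 1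
  refine nontrivial_of_ne (ModuleCat.ofHom φ) 0 fun hφ ↦ ?_
  have hone : φ (Ideal.Quotient.mk p.asIdeal 1) = 0 := congr($hφ (Ideal.Quotient.mk p.asIdeal 1))
  obtain ⟨t, ht⟩ := (IsLocalizedModule.eq_zero_iff p.asIdeal.primeCompl φ).1 hone
  have htp : Ideal.Quotient.mk p.asIdeal ((t : R) • 1) = 0 := ht
  rw [smul_eq_mul, mul_one, Ideal.Quotient.eq_zero_iff_mem] at htp
  exact t.2 htp

variable [IsNoetherianRing R]

lemma GradeGE.succ_localizationFunctor_obj {p : PrimeSpectrum R} {N : ModuleCat.{u} R} {x : R}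
    {n : ℕ} (hxp : x ∈ p.asIdeal) (hx : ∀ Q ∈ associatedPrimes R N, x ∈ Q → ¬ Q ≤ p.asIdeal)
    (hN : GradeGE (.of R (R ⧸ p.asIdeal)) n
      ((localizationFunctor p).obj (.of R (QuotSMulTop x N)))) :
    GradeGE (.of R (R ⧸ p.asIdeal)) (n + 1) ((localizationFunctor p).obj N) := by
  let φ := TensorProduct.mk R (Localization.AtPrime p.asIdeal) N 1
  have hreg : IsSMulRegular ((localizationFunctor p).obj N) x := by
    refine isSMulRegular_of_isLocalizedModule p.asIdeal.primeCompl
      (Localization.AtPrime p.asIdeal) φ fun Q hQ hxQ hdisj ↦ hx Q hQ hxQ ?_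
    exact Set.disjoint_compl_left_iff_subset.1 hdisj
  let e : (localizationFunctor p).obj (.of R (QuotSMulTop x N)) ≅
      .of R (QuotSMulTop x ((localizationFunctor p).obj N)) :=
    (QuotSMulTop.tensorQuotSMulTopEquivQuotSMulTop x _ N).toModuleIso
  exact .succ_of_isSMulRegular (by rwa [Ideal.annihilator_quotient]) hreg (hN.of_iso e)

lemma exists_gradeGE_localizationFunctor_obj {n : ℕ} (N : ModuleCat.{u} R) [Module.Finite R N]
    (c : LTSeries (PrimeSpectrum R)) (hc : c.length = n + 1) :
    ∃ p : PrimeSpectrum R, c.head ≤ p ∧ p < c.last ∧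
      GradeGE (.of R (R ⧸ p.asIdeal)) n ((localizationFunctor p).obj N) := by
  induction n generalizing N c with
  | zero =>
    have hlt : c.head < c.last := c.strictMono (Fin.lt_def.2 (by simp [hc]))
    exact ⟨c.head, le_rfl, hlt, fun i hi ↦ absurd hi i.not_lt_zero⟩
  | succ n ih =>
    obtain ⟨x, hxc, hx⟩ := exists_mem_forall_mem_associatedPrimes_imp_le (M := N) c.last.asIdeal
    obtain ⟨q, hxq, hlength, hhead, hlast⟩ :=
      PrimeSpectrum.exist_ltSeries_mem_one_of_mem_last c hxc
    obtain ⟨p, hqp, hpc, hp⟩ :=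
      ih (.of R (QuotSMulTop x N)) (q.tail (by lia)) (by rw [RelSeries.tail_length]; lia)
    rw [RelSeries.head_tail] at hqp
    rw [RelSeries.last_tail, ← hlast] at hpc
    have hhead_le : c.head ≤ q 1 := hhead ▸ q.monotone (Fin.zero_le _)
    refine ⟨p, hhead_le.trans hqp, hpc, .succ_localizationFunctor_obj (hqp hxq) ?_ hp⟩
    exact fun Q hQ hxQ hQp ↦ hpc.not_ge ((hx Q hQ hxQ).trans hQp)

end LocalizationAtPrime

theorem stmt18_general (R : Type u) [CommRing R] [IsNoetherianRing R] (s : ℕ)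
    (G : ModuleCat.{u} R) [Module.Finite R G]
    (hgen : ∀ p : PrimeSpectrum R, ∃ K ∈ resCl R G, IsSyz R s (.of R (R ⧸ p.asIdeal)) K) :
    ringKrullDim R ≤ ((s + 1 : ℕ) : ℕ∞) := by
  refine iSup_le fun c ↦ ?_
  by_contra! hc
  have hlength : s + 1 < c.length := by exact_mod_cast hc
  obtain ⟨p, -, -, hp⟩ := exists_gradeGE_localizationFunctor_obj (n := c.length - 1)
    (.of R (R × G)) c (by lia)
  have hR := hp.of_retract
    ((retractOfCompEqId (LinearMap.fst_comp_inl R R G)).map (localizationFunctor p))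
  have hG := hp.of_retract
    ((retractOfCompEqId (LinearMap.snd_comp_inr R R G)).map (localizationFunctor p))
  obtain ⟨K, hKG, hK⟩ := hgen p
  have hvanish := hKG _ ⟨isResolving_setOf_gradeGE_obj (localizationFunctor p) hR, hG⟩ s (by lia)
  have hne := nontrivial_ext_obj_of_isSyz (localizationFunctor p) hR
    (nontrivial_quotient_hom_localizationFunctor_obj p) (by lia) hK
  exact not_subsingleton_iff_nontrivial.2 hne hvanish

/-- a resolving generator forces finite Krull dimension, with
`dim R ≤ s + Rfd_R(G) + 1`. -/
theorem stmt18 (R : Type u) [CommRing R] [IsNoetherianRing R] (s : ℕ)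
    (G : ModuleCat.{u} R) [Module.Finite R G] (hG : Nontrivial G)
    (hgen : ∀ M : ModuleCat.{u} R, Module.Finite R M →
      ∀ K : ModuleCat.{u} R, IsSyz R s M K → K ∈ resCl R G) :
    ringKrullDim R ≠ ⊤ ∧
      ringKrullDim R ≤ (((s : ℕ∞) + rfdE R G + 1 : ℕ∞) : WithBot ℕ∞) := by
  have hdim : ringKrullDim R ≤ ((s + 1 : ℕ) : ℕ∞) := stmt18_general R s G fun p ↦ by
    obtain ⟨K, -, hK⟩ := exists_isSyz s (.of R (R ⧸ p.asIdeal))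
    exact ⟨K, hgen _ inferInstance K hK, hK⟩
  refine ⟨ne_top_of_le_ne_top ?_ hdim, hdim.trans (WithBot.coe_le_coe.2 ?_)⟩
  · exact WithBot.coe_injective.ne (ENat.natCast_ne_top (s + 1))
  · push_cast
    gcongr
    exact le_self_add
end
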